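/- Let Λ > 0, κ > 0 and R > √(3/Λ), and set H := √(Λ/3). There exists ε > 0 (depending only on Λ, κ, R) such that for every C¹ solution h : [0,∞)×[0,R] → ℝ of the reduced Einstein-Λ-scalar field equation Dh = G(h − h̄) with sup_{u≥0,0≤r≤R}(|h(u,r)| + |∂_r h(u,r)|) < ε, there exist a constant φ̄ ∈ ℝ and a constant C > 0 such that |h̄(u,r) − φ̄| ≤ C e^{−2Hu} for all u ≥ 0 and 0 ≤ r ≤ R; i.e. the scalar field φ = h̄ converges to a constant exponentially in Bondi time at rate 2H. -/

import Mathlib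

noncomputable section

open Real Set

/-- Radial average `h̄(u,r) = (1/r)∫₀ʳ h(u,s) ds`, with `h̄(u,0) = h(u,0)`. -/
def radAvg (h : ℝ → ℝ → ℝ) (u r : ℝ) : ℝ :=
  if r = 0 then h u 0 else (1 / r) * ∫ s in (0:ℝ)..r, h u s

/-- Metric coefficient `f(u,r) = exp((κ/2)∫₀ʳ (h−h̄)²/s ds)`. -/
def metricF (κ : ℝ) (h : ℝ → ℝ → ℝ) (u r : ℝ) : ℝ :=
  Real.exp ((κ / 2) * ∫ s in (0:ℝ)..r, (h u s - radAvg h u s) ^ 2 / s)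

/-- Metric coefficient `f̃(u,r) = (1/r)∫₀ʳ f ds − (Λ/r)∫₀ʳ f s² ds`, with `f̃(u,0)=1`. -/
def metricFt (Λ κ : ℝ) (h : ℝ → ℝ → ℝ) (u r : ℝ) : ℝ :=
  if r = 0 then 1
  else (1 / r) * (∫ s in (0:ℝ)..r, metricF κ h u s)
    - (Λ / r) * (∫ s in (0:ℝ)..r, metricF κ h u s * s ^ 2)

/-- Zeroth order coefficient `G(u,r) = (1/(2r))[(f − f̃) − Λ f r²]`. -/
def coefG (Λ κ : ℝ) (h : ℝ → ℝ → ℝ) (u r : ℝ) : ℝ :=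
  (1 / (2 * r)) * ((metricF κ h u r - metricFt Λ κ h u r) - Λ * metricF κ h u r * r ^ 2)

/-- Partial derivative of `h` in the Bondi time `u`, one-sided on `[0,∞)`. -/
def pdU (h : ℝ → ℝ → ℝ) (u r : ℝ) : ℝ :=
  derivWithin (fun u' => h u' r) (Ici 0) u

/-- Partial derivative of `h` in the radial coordinate `r`, on `[0,R]`. -/
def pdR (R : ℝ) (h : ℝ → ℝ → ℝ) (u r : ℝ) : ℝ :=
  derivWithin (fun r' => h u r') (Icc 0 R) r

/-- `h : [0,∞)×[0,R] → ℝ` is a C¹ solution of the reduced Einstein-Λ-scalar field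
equation `Dh = G(h − h̄)`: it is continuous with continuous partial derivatives on the
rectangular domain and satisfies the equation for `0 < r ≤ R`. -/
def IsC1Solution (Λ κ R : ℝ) (h : ℝ → ℝ → ℝ) : Prop :=
  ContinuousOn (fun p : ℝ × ℝ => h p.1 p.2) (Ici 0 ×ˢ Icc 0 R) ∧
  (∀ u ∈ Ici (0:ℝ), ∀ r ∈ Icc (0:ℝ) R,
      DifferentiableWithinAt ℝ (fun u' => h u' r) (Ici 0) u ∧
      DifferentiableWithinAt ℝ (fun r' => h u r') (Icc 0 R) r) ∧
  ContinuousOn (fun p : ℝ × ℝ => pdU h p.1 p.2) (Ici 0 ×ˢ Icc 0 R) ∧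
  ContinuousOn (fun p : ℝ × ℝ => pdR R h p.1 p.2) (Ici 0 ×ˢ Icc 0 R) ∧
  ∀ u ∈ Ici (0:ℝ), ∀ r ∈ Ioc (0:ℝ) R,
    pdU h u r - metricFt Λ κ h u r / 2 * pdR R h u r
      = coefG Λ κ h u r * (h u r - radAvg h u r)

/-!
With `Λ = 3 H²`, the equation linearised at de Sitter space is
`∂_u h = (1 - H² r²) / 2 * ∂_r h - H² r (h - h̄)`, and its `r`-derivative has the decaying mode
`e^{-2 H u} (1 + H r)⁻⁴`. Let `A` be a primitive of `(1 + H r)⁻⁴`. Since `h` is only `C¹`, the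
differentiated equation is not available; instead increments are compared,
`|h(u,t) - h(u,s)| ≤ b(u) (A(t) - A(s))`, by a maximum principle in the two points `s < t`. No
boundary condition is needed at `r = R`, because beyond the cosmological horizon `f̃(u,R) ≤ 0`.

If `h(u,·)` has Lipschitz constant `m`, the coefficients `f̃` and `G` differ from their de Sitter
values by `O(m²)`. A first comparison absorbs this error into half of the rate and gives decay like
`e^{-H u}`; the error is then of size `e^{-2 H u}`, hence integrable in time, and a second
comparison gives `e^{-2 H u}`. On the axis the equation reads `∂_u h = ∂_r h / 2`, so `h(u,0)`
converges at the same rate, and `h̄(u,r) - h(u,0)` is controlled by the Lipschitz constant.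
-/

/-! ### Dominated increments -/

/-- The increments of `g` on `S` are dominated by those of `B`. For `B r = m * r` this is Lipschitz
continuity with constant `m`; a quadratic `B` also records the order of vanishing at `r = 0`. -/
def IncrementLE (g B : ℝ → ℝ) (S : Set ℝ) : Prop :=
  ∀ s ∈ S, ∀ t ∈ S, s ≤ t → |g t - g s| ≤ B t - B s

namespace IncrementLE

variable {g k B C : ℝ → ℝ} {S : Set ℝ} {a b c m R : ℝ}

lemma trans (hg : IncrementLE g B S) (hB : IncrementLE B C S) : IncrementLE g C S :=
  fun s hs t ht hst => (hg s hs t ht hst).trans ((le_abs_self _).trans (hB s hs t ht hst))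

lemma abs_sub_le (hg : IncrementLE g B S) {s t : ℝ} (hs : s ∈ S) (ht : t ∈ S) :
    |g t - g s| ≤ |B t - B s| := by
  rcases le_total s t with hst | hts
  · exact (hg s hs t ht hst).trans (le_abs_self _)
  · rw [abs_sub_comm (g t), abs_sub_comm (B t)]
    exact (hg t ht s hs hts).trans (le_abs_self _)

lemma continuousOn (hg : IncrementLE g B S) (hB : ContinuousOn B S) : ContinuousOn g S := by
  intro s hs
  have hBs : Filter.Tendsto (fun t => |B t - B s|) (nhdsWithin s S) (nhds 0) := by
    simpa using ((hB s hs).sub_const (B s)).abs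
  refine tendsto_iff_dist_tendsto_zero.2
    (squeeze_zero' (.of_forall fun _ => dist_nonneg) ?_ hBs)
  filter_upwards [self_mem_nhdsWithin] with t ht using hg.abs_sub_le hs ht

lemma neg (hg : IncrementLE g B S) : IncrementLE (fun r => -g r) B S := fun s hs t ht hst => by
  rw [neg_sub_neg, abs_sub_comm]
  exact hg s hs t ht hst

lemma add (hg : IncrementLE g B S) (hk : IncrementLE k C S) :
    IncrementLE (fun r => g r + k r) (fun r => B r + C r) S := fun s hs t ht hst => by
  rw [add_sub_add_comm, add_sub_add_comm]
  exact (abs_add_le _ _).trans (add_le_add (hg s hs t ht hst) (hk s hs t ht hst))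

lemma sub (hg : IncrementLE g B S) (hk : IncrementLE k C S) :
    IncrementLE (fun r => g r - k r) (fun r => B r + C r) S := by
  simpa only [sub_eq_add_neg] using hg.add hk.neg

lemma const_mul (c : ℝ) (hg : IncrementLE g B S) :
    IncrementLE (fun r => c * g r) (fun r => |c| * B r) S := fun s hs t ht hst => by
  rw [← mul_sub, ← mul_sub, abs_mul]
  exact mul_le_mul_of_nonneg_left (hg s hs t ht hst) (abs_nonneg c)

lemma mul (hg : IncrementLE g B S) (hk : IncrementLE k C S) (hga : ∀ r ∈ S, |g r| ≤ a)
    (hkb : ∀ r ∈ S, |k r| ≤ b) :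
    IncrementLE (fun r => g r * k r) (fun r => b * B r + a * C r) S := fun s hs t ht hst => by
  have hgt := hg s hs t ht hst
  have hkt := hk s hs t ht hst
  calc |g t * k t - g s * k s| = |(g t - g s) * k t + g s * (k t - k s)| := by ring_nf
    _ ≤ |g t - g s| * |k t| + |g s| * |k t - k s| := by
      rw [← abs_mul, ← abs_mul]; exact abs_add_le _ _
    _ ≤ (B t - B s) * b + a * (C t - C s) := by
      gcongr
      exacts [(abs_nonneg _).trans hgt, hkb t ht, (abs_nonneg _).trans (hga s hs), hga s hs]
    _ = b * B t + a * C t - (b * B s + a * C s) := by ring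

lemma exp_comp (hg : IncrementLE g B S) (ha : ∀ r ∈ S, g r ≤ a) :
    IncrementLE (fun r => exp (g r)) (fun r => exp a * B r) S := fun s hs t ht hst => by
  have exp_sub_le (x y : ℝ) (hx : x ≤ a) : exp x - exp y ≤ exp a * |x - y| :=
    calc exp x - exp y = exp x * (1 - exp (y - x)) := by rw [mul_sub, ← exp_add]; ring_nf
      _ ≤ exp x * |x - y| := by
        gcongr
        linarith [add_one_le_exp (y - x), le_abs_self (x - y)]
      _ ≤ exp a * |x - y| := by gcongr
  have hB : exp a * |g t - g s| ≤ exp a * B t - exp a * B s := by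
    rw [← mul_sub]
    exact mul_le_mul_of_nonneg_left (hg s hs t ht hst) (exp_pos a).le
  refine le_trans (abs_le'.2 ⟨exp_sub_le _ _ (ha t ht), ?_⟩) hB
  rw [neg_sub, abs_sub_comm]
  exact exp_sub_le _ _ (ha s hs)

lemma abs_le (hg : IncrementLE g B (Icc 0 R)) (hg0 : g 0 = 0) (hB0 : B 0 = 0) {r : ℝ}
    (hr : r ∈ Icc 0 R) : |g r| ≤ B r := by
  simpa [hg0, hB0] using hg 0 (left_mem_Icc.2 (hr.1.trans hr.2)) r hr hr.1

lemma sq (hg : IncrementLE g (fun r => m * r) (Icc 0 R)) (hg0 : g 0 = 0) :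
    IncrementLE (fun r => g r ^ 2) (fun r => m ^ 2 * r ^ 2) (Icc 0 R) := fun s hs t ht hst => by
  calc |g t ^ 2 - g s ^ 2| = |g t - g s| * |g t + g s| := by rw [← abs_mul]; ring_nf
    _ ≤ (m * t - m * s) * (m * t + m * s) := by
      gcongr
      · exact (abs_nonneg _).trans (hg s hs t ht hst)
      · exact hg s hs t ht hst
      · exact (abs_add_le _ _).trans
          (add_le_add (hg.abs_le hg0 (mul_zero m) ht) (hg.abs_le hg0 (mul_zero m) hs))
    _ = m ^ 2 * t ^ 2 - m ^ 2 * s ^ 2 := by ring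

lemma div_id (hg : IncrementLE g (fun r => c * r ^ 2) (Icc 0 R)) (hg0 : g 0 = 0) :
    IncrementLE (fun r => g r / r) (fun r => 3 * c * r) (Icc 0 R) := fun s hs t ht hst => by
  have habs {r : ℝ} (hr : r ∈ Icc 0 R) : |g r| ≤ c * r ^ 2 := hg.abs_le hg0 (by simp) hr
  rcases ht.1.eq_or_lt with rfl | ht0
  · obtain rfl : s = 0 := le_antisymm hst hs.1
    simp
  have hc : 0 ≤ c :=
    nonneg_of_mul_nonneg_left ((abs_nonneg _).trans (habs ht)) (pow_pos ht0 2)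
  rcases hs.1.eq_or_lt with rfl | hs0
  · have : |g t| / t ≤ c * t := by rw [div_le_iff₀ ht0]; linarith [habs ht]
    simp only [hg0, zero_div, sub_zero, mul_zero, abs_div, abs_of_pos ht0]
    nlinarith
  calc |g t / t - g s / s| = |(g t - g s) / t - g s * ((t - s) / (t * s))| := by
        congr 1; field_simp; ring
    _ ≤ |g t - g s| / t + |g s| * ((t - s) / (t * s)) := by
      refine (abs_sub _ _).trans_eq ?_
      rw [abs_div, abs_mul, abs_of_pos ht0,
        abs_of_nonneg (div_nonneg (sub_nonneg.2 hst) (mul_pos ht0 hs0).le)]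
    _ ≤ (c * t ^ 2 - c * s ^ 2) / t + c * s ^ 2 * ((t - s) / (t * s)) := by
      have : 0 ≤ (t - s) / (t * s) := div_nonneg (sub_nonneg.2 hst) (mul_pos ht0 hs0).le
      gcongr
      exacts [hg s hs t ht hst, habs hs]
    _ = c * (t - s) * ((t + 2 * s) / t) := by field_simp; ring
    _ ≤ c * (t - s) * 3 := by
      have : 0 ≤ c * (t - s) := mul_nonneg hc (sub_nonneg.2 hst)
      gcongr
      rw [div_le_iff₀ ht0]
      linarith
    _ = 3 * c * t - 3 * c * s := by ring

lemma exists_abs_sub_le {a : ℝ} (hg : IncrementLE g (fun r => -B r) (Ici a))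
    (hB : ∀ r ≥ a, 0 ≤ B r) : ∃ l, ∀ r ≥ a, |g r - l| ≤ B r := by
  have hnested : ∀ s ≥ a, ∀ t ≥ a, g s - B s ≤ g t + B t := fun s hs t ht => by
    rcases le_total s t with hst | hts
    · linarith [(abs_le'.1 (hg s hs t ht hst)).2, hB t ht]
    · linarith [(abs_le'.1 (hg t ht s hs hts)).1, hB s hs]
  set L := (fun s => g s - B s) '' Ici a
  have hL : ∀ t ≥ a, g t + B t ∈ upperBounds L := fun t ht =>
    forall_mem_image.2 fun s hs => hnested s hs t ht
  refine ⟨sSup L, fun r hr => abs_sub_le_iff.2 ⟨?_, ?_⟩⟩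
  · linarith [le_csSup ⟨_, hL r hr⟩ (mem_image_of_mem (fun s => g s - B s) hr)]
  · linarith [csSup_le (nonempty_Ici.image _) (hL r hr)]

end IncrementLE

lemma incrementLE_of_abs_deriv_le {g g' B B' : ℝ → ℝ} {S : Set ℝ} (hS : S.OrdConnected)
    (hg : ∀ r ∈ S, HasDerivWithinAt g (g' r) S r) (hB : ∀ r ∈ S, HasDerivWithinAt B (B' r) S r)
    (hle : ∀ r ∈ S, |g' r| ≤ B' r) : IncrementLE g B S := by
  intro s hs t ht hst
  have hsub : Icc s t ⊆ S := hS.out hs ht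
  have hIci {k k' : ℝ → ℝ} (hk : ∀ r ∈ S, HasDerivWithinAt k (k' r) S r) :
      ∀ r ∈ Ico s t, HasDerivWithinAt k (k' r) (Ici r) r := fun r hr =>
    ((hk r (hsub (Ico_subset_Icc_self hr))).mono hsub).mono_of_mem_nhdsWithin
      (Icc_mem_nhdsGE_of_mem hr)
  refine image_norm_le_of_norm_deriv_right_le_deriv_boundary' (a := s) (b := t)
    (f := fun r => g r - g s) (B := fun r => B r - B s)
    (fun r hr => ((hg r (hsub hr)).mono hsub).continuousWithinAt.sub_const _)
    (fun r hr => (hIci hg r hr).sub_const _) (by simp)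
    (fun r hr => ((hB r (hsub hr)).mono hsub).continuousWithinAt.sub_const _)
    (fun r hr => (hIci hB r hr).sub_const _)
    (fun r hr => hle r (hsub (Ico_subset_Icc_self hr))) (right_mem_Icc.2 hst)

lemma incrementLE_integral {q : ℝ → ℝ} {c R : ℝ} (hq : ContinuousOn q (Icc 0 R))
    (hqc : ∀ r ∈ Icc 0 R, |q r| ≤ c * r) :
    IncrementLE (fun r => ∫ s in (0 : ℝ)..r, q s) (fun r => c / 2 * r ^ 2) (Icc 0 R) := by
  intro s hs t ht hst
  have hint {r : ℝ} (hr : r ∈ Icc 0 R) : IntervalIntegrable q MeasureTheory.volume 0 r :=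
    (hq.mono (Icc_subset_Icc_right hr.2)).intervalIntegrable_of_Icc hr.1
  calc |(∫ x in (0 : ℝ)..t, q x) - ∫ x in (0 : ℝ)..s, q x| = ‖∫ x in s..t, q x‖ := by
        rw [intervalIntegral.integral_interval_sub_left (hint ht) (hint hs), Real.norm_eq_abs]
    _ ≤ ∫ x in s..t, c * x :=
      intervalIntegral.norm_integral_le_of_norm_le hst
        (.of_forall fun x hx => hqc x ⟨hs.1.trans hx.1.le, hx.2.trans ht.2⟩)
        (Continuous.intervalIntegrable (by fun_prop) _ _)
    _ = c / 2 * t ^ 2 - c / 2 * s ^ 2 := by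
      rw [intervalIntegral.integral_const_mul, integral_id]; ring

/-! ### Radial means -/

/-- The mean of `k` over `[0, r]`. Rescaling to the unit interval gives the value `k 0` at `r = 0`,
so no case distinction is needed at the axis. -/
def radialMean (k : ℝ → ℝ) (r : ℝ) : ℝ := ∫ x in (0 : ℝ)..1, k (r * x)

section RadialMean

variable {k l : ℝ → ℝ} {b c r r₁ r₂ R : ℝ}

lemma mul_radialMean (k : ℝ → ℝ) (r : ℝ) : r * radialMean k r = ∫ s in (0 : ℝ)..r, k s := by
  simp [radialMean]

lemma radialMean_eq_div (k : ℝ → ℝ) (hr : r ≠ 0) :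
    radialMean k r = (1 / r) * ∫ s in (0 : ℝ)..r, k s := by
  rw [← mul_radialMean, one_div, inv_mul_cancel_left₀ hr]

@[simp]
lemma radialMean_zero (k : ℝ → ℝ) : radialMean k 0 = k 0 := by simp [radialMean]

lemma radAvg_eq_radialMean (h : ℝ → ℝ → ℝ) (u r : ℝ) : radAvg h u r = radialMean (h u) r := by
  unfold radAvg
  split_ifs with hr
  · rw [hr, radialMean_zero]
  · rw [radialMean_eq_div _ hr]

lemma radialMean_const_mul (c : ℝ) (k : ℝ → ℝ) (r : ℝ) :
    radialMean (fun s => c * k s) r = c * radialMean k r :=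
  intervalIntegral.integral_const_mul _ _

lemma mul_mem_Icc (hr : r ∈ Icc 0 R) {x : ℝ} (hx : x ∈ Icc (0 : ℝ) 1) : r * x ∈ Icc 0 R :=
  ⟨mul_nonneg hr.1 hx.1, (mul_le_of_le_one_right hr.1 hx.2).trans hr.2⟩

lemma intervalIntegrable_comp_mul (hk : ContinuousOn k (Icc 0 R)) (hr : r ∈ Icc 0 R) :
    IntervalIntegrable (fun x => k (r * x)) MeasureTheory.volume 0 1 :=
  ContinuousOn.intervalIntegrable_of_Icc zero_le_one
    (hk.comp (by fun_prop) fun _ hx => mul_mem_Icc hr hx)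

lemma radialMean_sub (hk : ContinuousOn k (Icc 0 R)) (hl : ContinuousOn l (Icc 0 R))
    (hr : r ∈ Icc 0 R) :
    radialMean (fun s => k s - l s) r = radialMean k r - radialMean l r :=
  intervalIntegral.integral_sub (intervalIntegrable_comp_mul hk hr)
    (intervalIntegrable_comp_mul hl hr)

lemma abs_radialMean_sub_le (hk : ContinuousOn k (Icc 0 R)) (hr₁ : r₁ ∈ Icc 0 R)
    (hr₂ : r₂ ∈ Icc 0 R) (hb : ∀ x ∈ Icc (0 : ℝ) 1, |k (r₂ * x) - k (r₁ * x)| ≤ b) :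
    |radialMean k r₂ - radialMean k r₁| ≤ b := by
  rw [radialMean, radialMean, ← intervalIntegral.integral_sub (intervalIntegrable_comp_mul hk hr₂)
    (intervalIntegrable_comp_mul hk hr₁), ← Real.norm_eq_abs]
  refine (intervalIntegral.norm_integral_le_of_norm_le_const fun x hx => ?_).trans_eq
    (by simp : b * |(1 : ℝ) - 0| = b)
  rw [uIoc_of_le zero_le_one] at hx
  exact hb x (Ioc_subset_Icc_self hx)

lemma abs_sub_radialMean_le (hk : ContinuousOn k (Icc 0 R)) (hr : r ∈ Icc 0 R)
    (hb : ∀ s ∈ Icc 0 r, |k r - k s| ≤ b) : |k r - radialMean k r| ≤ b := by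
  have hconst : k r - radialMean k r = ∫ x in (0 : ℝ)..1, (k r - k (r * x)) := by
    rw [intervalIntegral.integral_sub (by simp) (intervalIntegrable_comp_mul hk hr)]
    simp [radialMean]
  rw [hconst, ← Real.norm_eq_abs]
  refine (intervalIntegral.norm_integral_le_of_norm_le_const fun x hx => ?_).trans_eq
    (by simp : b * |(1 : ℝ) - 0| = b)
  rw [uIoc_of_le zero_le_one] at hx
  exact hb _ (mul_mem_Icc ⟨hr.1, le_rfl⟩ (Ioc_subset_Icc_self hx))

lemma IncrementLE.radialMean_pow {n : ℕ} (hk : IncrementLE k (fun r => c * r ^ n) (Icc 0 R)) :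
    IncrementLE (radialMean k) (fun r => c * r ^ n) (Icc 0 R) := by
  intro s hs t ht hst
  refine abs_radialMean_sub_le (hk.continuousOn (by fun_prop)) hs ht fun x hx => ?_
  have hpos : 0 ≤ c * t ^ n - c * s ^ n := (abs_nonneg _).trans (hk s hs t ht hst)
  calc |k (t * x) - k (s * x)| ≤ c * (t * x) ^ n - c * (s * x) ^ n :=
        hk _ (mul_mem_Icc hs hx) _ (mul_mem_Icc ht hx) (mul_le_mul_of_nonneg_right hst hx.1)
    _ = (c * t ^ n - c * s ^ n) * x ^ n := by ring
    _ ≤ c * t ^ n - c * s ^ n := mul_le_of_le_one_right hpos (pow_le_one₀ hx.1 hx.2)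

lemma IncrementLE.radialMean_linear (hk : IncrementLE k (fun r => c * r) (Icc 0 R)) :
    IncrementLE (radialMean k) (fun r => c * r) (Icc 0 R) := by
  simpa only [pow_one] using IncrementLE.radialMean_pow (n := 1) (by simpa only [pow_one] using hk)

lemma mul_sub_radialMean_le_of_le_right (hk : ContinuousOn k (Icc 0 r₂)) (h0 : 0 ≤ r₁)
    (h12 : r₁ ≤ r₂) (hmax : ∀ r ∈ Icc r₁ r₂, k r ≤ k r₂) :
    r₁ * (k r₁ - radialMean k r₁) ≤ r₂ * (k r₂ - radialMean k r₂) := by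
  have hint : IntervalIntegrable k MeasureTheory.volume 0 r₁ :=
    (hk.mono (Icc_subset_Icc_right h12)).intervalIntegrable_of_Icc h0
  have hint' : IntervalIntegrable k MeasureTheory.volume r₁ r₂ :=
    (hk.mono (Icc_subset_Icc_left h0)).intervalIntegrable_of_Icc h12
  have hmean : ∫ s in r₁..r₂, k s ≤ (r₂ - r₁) * k r₂ := by
    simpa using intervalIntegral.integral_mono_on h12 hint' intervalIntegrable_const hmax
  have hadd := intervalIntegral.integral_add_adjacent_intervals hint hint'
  have hr₁ := mul_le_mul_of_nonneg_left (hmax r₁ (left_mem_Icc.2 h12)) h0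
  rw [mul_sub, mul_sub, mul_radialMean, mul_radialMean]
  linarith

end RadialMean

/-! ### Deviation of the coefficients from de Sitter -/

/-- The deviation of the metric coefficient `f̃` from its de Sitter value `1 - Λ r² / 3`. -/
def ftDev (Λ κ : ℝ) (h : ℝ → ℝ → ℝ) (u r : ℝ) : ℝ :=
  metricFt Λ κ h u r - (1 - Λ / 3 * r ^ 2)

/-- The deviation of the coefficient `G` from its de Sitter value `-Λ r / 3`. -/
def gDev (Λ κ : ℝ) (h : ℝ → ℝ → ℝ) (u r : ℝ) : ℝ :=
  coefG Λ κ h u r + Λ / 3 * r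

/-- The source `(f - 1)(1 - Λ r²)` of both deviations: `ftDev` is its radial mean and
`2 r * gDev` its deviation from the mean. -/
def metricSource (Λ κ : ℝ) (h : ℝ → ℝ → ℝ) (u r : ℝ) : ℝ :=
  (metricF κ h u r - 1) * (1 - Λ * r ^ 2)

section Coefficients

variable {Λ κ R m u r : ℝ} {h : ℝ → ℝ → ℝ}

lemma metricF_zero (κ : ℝ) (h : ℝ → ℝ → ℝ) (u : ℝ) : metricF κ h u 0 = 1 := by simp [metricF]

lemma ftDev_zero (Λ κ : ℝ) (h : ℝ → ℝ → ℝ) (u : ℝ) : ftDev Λ κ h u 0 = 0 := by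
  simp [ftDev, metricFt]

lemma gDev_zero (Λ κ : ℝ) (h : ℝ → ℝ → ℝ) (u : ℝ) : gDev Λ κ h u 0 = 0 := by
  simp [gDev, coefG]

lemma radialMean_one_sub_sq (Λ r : ℝ) :
    radialMean (fun s => 1 - Λ * s ^ 2) r = 1 - Λ / 3 * r ^ 2 := by
  rcases eq_or_ne r 0 with rfl | hr
  · simp
  rw [radialMean_eq_div _ hr, intervalIntegral.integral_sub (by simp)
    (Continuous.intervalIntegrable (by fun_prop) _ _), intervalIntegral.integral_const_mul,
    integral_pow, intervalIntegral.integral_const, smul_eq_mul]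
  field_simp
  norm_num
  ring

lemma metricFt_eq_radialMean (hf : ContinuousOn (metricF κ h u) (Icc 0 R)) (hr : r ∈ Icc 0 R) :
    metricFt Λ κ h u r = radialMean (fun s => metricF κ h u s * (1 - Λ * s ^ 2)) r := by
  rcases eq_or_ne r 0 with rfl | hr0
  · simp [metricFt, metricF_zero]
  have hint : IntervalIntegrable (metricF κ h u) MeasureTheory.volume 0 r :=
    (hf.mono (Icc_subset_Icc_right hr.2)).intervalIntegrable_of_Icc hr.1
  have hint' : IntervalIntegrable (fun s => metricF κ h u s * s ^ 2) MeasureTheory.volume 0 r :=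
    hint.mul_continuousOn (by fun_prop)
  have hsplit : ∫ s in (0 : ℝ)..r, metricF κ h u s * (1 - Λ * s ^ 2)
      = (∫ s in (0 : ℝ)..r, metricF κ h u s) - Λ * ∫ s in (0 : ℝ)..r, metricF κ h u s * s ^ 2 := by
    rw [← intervalIntegral.integral_const_mul,
      ← intervalIntegral.integral_sub hint (hint'.const_mul Λ)]
    exact intervalIntegral.integral_congr fun s _ => by ring
  rw [metricFt, if_neg hr0, radialMean_eq_div _ hr0, hsplit]
  ring

lemma ftDev_eq_radialMean (hf : ContinuousOn (metricF κ h u) (Icc 0 R)) (hr : r ∈ Icc 0 R) :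
    ftDev Λ κ h u r = radialMean (metricSource Λ κ h u) r := by
  unfold metricSource
  rw [ftDev, metricFt_eq_radialMean hf hr, ← radialMean_one_sub_sq,
    ← radialMean_sub (by fun_prop) (by fun_prop) hr]
  simp only [sub_one_mul]

lemma gDev_eq (hf : ContinuousOn (metricF κ h u) (Icc 0 R)) (hr : r ∈ Icc 0 R) :
    gDev Λ κ h u r
      = (1 / 2) * ((metricSource Λ κ h u r - radialMean (metricSource Λ κ h u) r) / r) := by
  rcases eq_or_ne r 0 with rfl | hr0
  · simp [gDev, coefG]
  rw [← ftDev_eq_radialMean hf hr, gDev, coefG, ftDev, metricSource]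
  field_simp
  ring

lemma incrementLE_sub_radAvg (hh : IncrementLE (h u) (fun r => m * r) (Icc 0 R)) :
    IncrementLE (fun r => h u r - radAvg h u r) (fun r => 2 * m * r) (Icc 0 R) := by
  simp only [radAvg_eq_radialMean]
  exact fun s hs t ht hst => (hh.sub hh.radialMean_linear s hs t ht hst).trans_eq (by ring)

lemma incrementLE_metricF_exponent (hh : IncrementLE (h u) (fun r => m * r) (Icc 0 R)) :
    IncrementLE (fun r => κ / 2 * ∫ s in (0 : ℝ)..r, (h u s - radAvg h u s) ^ 2 / s)
      (fun r => 3 * |κ| * m ^ 2 * r ^ 2) (Icc 0 R) := by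
  have h0 : h u 0 - radAvg h u 0 = 0 := by simp [radAvg]
  have hq := ((incrementLE_sub_radAvg hh).sq h0).div_id (by simp [h0])
  have hI := incrementLE_integral (hq.continuousOn (by fun_prop))
    fun r hr => hq.abs_le (by simp) (by simp) hr
  refine fun s hs t ht hst => (hI.const_mul (κ / 2) s hs t ht hst).trans_eq ?_
  rw [abs_div, abs_two]
  ring

lemma incrementLE_metricF (hh : IncrementLE (h u) (fun r => m * r) (Icc 0 R)) (hm : |m| ≤ 1) :
    IncrementLE (metricF κ h u) (fun r => 3 * |κ| * exp (3 * |κ| * R ^ 2) * m ^ 2 * r ^ 2)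
      (Icc 0 R) := by
  have hI := incrementLE_metricF_exponent (κ := κ) hh
  have hm2 : m ^ 2 ≤ 1 := sq_le_one_iff_abs_le_one m |>.2 hm
  have hle : ∀ r ∈ Icc 0 R, κ / 2 * ∫ s in (0 : ℝ)..r, (h u s - radAvg h u s) ^ 2 / s
      ≤ 3 * |κ| * R ^ 2 := fun r hr =>
    calc _ ≤ 3 * |κ| * m ^ 2 * r ^ 2 := (le_abs_self _).trans (hI.abs_le (by simp) (by simp) hr)
      _ ≤ 3 * |κ| * 1 * R ^ 2 := by gcongr; exacts [hr.1, hr.2]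
      _ = 3 * |κ| * R ^ 2 := by ring
  exact fun s hs t ht hst => (hI.exp_comp hle s hs t ht hst).trans_eq (by ring)

lemma incrementLE_metricSource (hh : IncrementLE (h u) (fun r => m * r) (Icc 0 R))
    (hm : |m| ≤ 1) :
    IncrementLE (metricSource Λ κ h u) (fun r => (1 + 2 * |Λ| * R ^ 2) *
      (3 * |κ| * exp (3 * |κ| * R ^ 2)) * m ^ 2 * r ^ 2) (Icc 0 R) := by
  have hf : IncrementLE (fun r => metricF κ h u r - 1)
      (fun r => 3 * |κ| * exp (3 * |κ| * R ^ 2) * m ^ 2 * r ^ 2) (Icc 0 R) := by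
    simpa only [IncrementLE, sub_sub_sub_cancel_right] using incrementLE_metricF hh hm
  have hw : IncrementLE (fun r => 1 - Λ * r ^ 2) (fun r => |Λ| * r ^ 2) (Icc 0 R) := by
    intro s hs t _ hst
    have : 0 ≤ t ^ 2 - s ^ 2 := sub_nonneg.2 (pow_le_pow_left₀ hs.1 hst 2)
    rw [show 1 - Λ * t ^ 2 - (1 - Λ * s ^ 2) = -(Λ * (t ^ 2 - s ^ 2)) by ring, abs_neg, abs_mul,
      abs_of_nonneg this, mul_sub]
  have hfR : ∀ r ∈ Icc 0 R,
      |metricF κ h u r - 1| ≤ 3 * |κ| * exp (3 * |κ| * R ^ 2) * m ^ 2 * R ^ 2 := fun r hr => by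
    refine (hf.abs_le (by simp [metricF_zero]) (by simp) hr).trans ?_
    gcongr
    exacts [hr.1, hr.2]
  have hwR : ∀ r ∈ Icc 0 R, |1 - Λ * r ^ 2| ≤ 1 + |Λ| * R ^ 2 := fun r hr =>
    calc |1 - Λ * r ^ 2| ≤ 1 + |Λ| * r ^ 2 := by
          refine (abs_sub 1 (Λ * r ^ 2)).trans_eq ?_
          rw [abs_one, abs_mul, abs_sq]
      _ ≤ 1 + |Λ| * R ^ 2 := by gcongr; exacts [hr.1, hr.2]
  exact fun s hs t ht hst => (hf.mul hw hfR hwR s hs t ht hst).trans_eq (by ring)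

/-- `c` is the constant of the estimate that both deviations from de Sitter are quadratically small
in the Lipschitz constant of the scalar field. -/
def DeviationBound (Λ κ R c : ℝ) : Prop :=
  ∀ (h : ℝ → ℝ → ℝ) (u m : ℝ), |m| ≤ 1 → IncrementLE (h u) (fun r => m * r) (Icc 0 R) →
    IncrementLE (ftDev Λ κ h u) (fun r => c * m ^ 2 * r) (Icc 0 R) ∧
      IncrementLE (gDev Λ κ h u) (fun r => c * m ^ 2 * r) (Icc 0 R)

theorem exists_deviationBound (Λ κ : ℝ) (hR : 0 ≤ R) : ∃ c ≥ 0, DeviationBound Λ κ R c := by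
  set c := (1 + 2 * |Λ| * R ^ 2) * (3 * |κ| * exp (3 * |κ| * R ^ 2)) with hc
  have : 0 ≤ c := by positivity
  refine ⟨(2 * R + 3) * c, by positivity, fun h u m hm hh => ?_⟩
  have hf : ContinuousOn (metricF κ h u) (Icc 0 R) :=
    (incrementLE_metricF hh hm).continuousOn (by fun_prop)
  have hE := incrementLE_metricSource (Λ := Λ) (κ := κ) hh hm
  rw [← hc] at hE
  have hEsub := hE.sub hE.radialMean_pow
  have hEdiv : IncrementLE (fun r => (metricSource Λ κ h u r
      - radialMean (metricSource Λ κ h u) r) / r) (fun r => 3 * (2 * c * m ^ 2) * r) (Icc 0 R) :=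
    IncrementLE.div_id (fun s hs t ht hst => (hEsub s hs t ht hst).trans_eq (by ring))
      (by simp)
  constructor <;> intro s hs t ht hst
  · have hcm : 0 ≤ c * m ^ 2 * (t - s) := by have := sub_nonneg.2 hst; positivity
    rw [ftDev_eq_radialMean hf hs, ftDev_eq_radialMean hf ht]
    refine (hE.radialMean_pow s hs t ht hst).trans ?_
    nlinarith [hs.2, ht.2]
  · have hcm : 0 ≤ c * m ^ 2 * (R * (t - s)) := by have := sub_nonneg.2 hst; positivity
    rw [gDev_eq hf hs, gDev_eq hf ht]
    refine (hEdiv.const_mul (1 / 2) s hs t ht hst).trans ?_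
    rw [abs_of_pos one_half_pos]
    linarith

end Coefficients

/-! ### The de Sitter decay profile -/

/-- The weight `(1 + H r)⁻⁴`. It is the decaying mode of the differentiated de Sitter equation: its
primitive `decayProfile` is an eigenfunction with eigenvalue `-2 H`, up to a constant, of the linear
operator that governs the de Sitter case. -/
def decayWeight (H r : ℝ) : ℝ := (1 + H * r)⁻¹ ^ 4

/-- A primitive of `decayWeight H`, in whose increments the increments of solutions are measured. -/
def decayProfile (H r : ℝ) : ℝ := -(1 / (3 * H)) * (1 + H * r)⁻¹ ^ 3

section DecayProfile

variable {H R r r₁ r₂ b : ℝ} {g : ℝ → ℝ}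

lemma hasDerivAt_inv_one_add_mul_pow (n : ℕ) (hH : 0 < H) (hr : 0 ≤ r) :
    HasDerivAt (fun s => (1 + H * s)⁻¹ ^ n) (-(n * H) * (1 + H * r)⁻¹ ^ (n + 1)) r := by
  have hpos : 1 + H * r ≠ 0 := by positivity
  have hlin : HasDerivAt (fun s => 1 + H * s) H r := by
    simpa using ((hasDerivAt_id r).const_mul H).const_add 1
  refine ((hlin.inv hpos).pow n).congr_deriv ?_
  rcases n with _ | n
  · simp
  · simp only [Nat.add_sub_cancel, Pi.inv_apply, inv_pow]
    field_simp
    ring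

lemma hasDerivAt_decayProfile (hH : 0 < H) (hr : 0 ≤ r) :
    HasDerivAt (decayProfile H) (decayWeight H r) r := by
  refine ((hasDerivAt_inv_one_add_mul_pow 3 hH hr).const_mul (-(1 / (3 * H)))).congr_deriv ?_
  rw [decayWeight]
  push_cast
  field_simp

lemma continuousOn_decayProfile (hH : 0 < H) : ContinuousOn (decayProfile H) (Ici 0) :=
  fun _ hr => (hasDerivAt_decayProfile hH hr).continuousAt.continuousWithinAt

lemma inv_one_add_mul_mem_Icc (hH : 0 < H) (hr : 0 ≤ r) : (1 + H * r)⁻¹ ∈ Icc (0 : ℝ) 1 :=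
  ⟨by positivity, inv_le_one_of_one_le₀ (by nlinarith)⟩

lemma abs_decayWeight_le_one (hH : 0 < H) (hr : 0 ≤ r) : |decayWeight H r| ≤ 1 := by
  have hx := inv_one_add_mul_mem_Icc hH hr
  rw [decayWeight, abs_of_nonneg (pow_nonneg hx.1 4)]
  exact pow_le_one₀ hx.1 hx.2

lemma decayProfile_le_decayProfile (hH : 0 < H) (h0 : 0 ≤ r₁) (h12 : r₁ ≤ r₂) :
    decayProfile H r₁ ≤ decayProfile H r₂ := by
  have : 0 < 1 + H * r₁ := by positivity
  have : 0 ≤ r₂ := h0.trans h12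
  refine mul_le_mul_of_nonpos_left ?_ (neg_nonpos.2 (by positivity))
  gcongr

lemma incrementLE_decayWeight (hH : 0 < H) :
    IncrementLE (decayWeight H) (fun r => 4 * H * r) (Icc 0 R) := by
  refine incrementLE_of_abs_deriv_le ordConnected_Icc
    (fun r hr => (hasDerivAt_inv_one_add_mul_pow 4 hH hr.1).hasDerivWithinAt)
    (fun r _ => (hasDerivAt_const_mul (4 * H)).hasDerivWithinAt) fun r hr => ?_
  have hx := inv_one_add_mul_mem_Icc hH hr.1
  rw [abs_mul, abs_neg, abs_of_nonneg (by positivity), abs_of_nonneg (pow_nonneg hx.1 5)]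
  exact mul_le_of_le_one_right (by positivity) (pow_le_one₀ hx.1 hx.2)

lemma incrementLE_decayProfile (hH : 0 < H) :
    IncrementLE (decayProfile H) (fun r => r) (Icc 0 R) :=
  incrementLE_of_abs_deriv_le ordConnected_Icc
    (fun _ hr => (hasDerivAt_decayProfile hH hr.1).hasDerivWithinAt)
    (fun r _ => hasDerivWithinAt_id r _) fun _ hr => abs_decayWeight_le_one hH hr.1

lemma incrementLE_id_decayProfile (hH : 0 < H) :
    IncrementLE (fun r => r) (fun r => (1 + H * R) ^ 4 * decayProfile H r) (Icc 0 R) := by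
  refine incrementLE_of_abs_deriv_le ordConnected_Icc (fun r _ => hasDerivWithinAt_id r _)
    (fun r hr => ((hasDerivAt_decayProfile hH hr.1).const_mul _).hasDerivWithinAt) fun r hr => ?_
  have hpos : 0 < 1 + H * r := by nlinarith [hr.1]
  rw [abs_one, decayWeight, ← mul_pow]
  refine one_le_pow₀ ?_
  rw [← div_eq_mul_inv, one_le_div hpos]
  gcongr
  exact hr.2

lemma integral_decayProfile (hH : 0 < H) (hr : 0 ≤ r) :
    ∫ s in (0 : ℝ)..r, decayProfile H s = 1 / (6 * H ^ 2) * ((1 + H * r)⁻¹ ^ 2 - 1) := by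
  have huIcc : uIcc 0 r ⊆ Ici 0 := by rw [uIcc_of_le hr]; exact Icc_subset_Ici_self
  rw [intervalIntegral.integral_eq_sub_of_hasDerivAt
    (f := fun s => 1 / (6 * H ^ 2) * (1 + H * s)⁻¹ ^ 2)
    (fun s hs => ((hasDerivAt_inv_one_add_mul_pow 2 hH (huIcc hs)).const_mul _).congr_deriv ?_)
    ((continuousOn_decayProfile hH).mono huIcc).intervalIntegrable]
  · simp [mul_sub]
  · rw [decayProfile]
    push_cast
    field_simp
    norm_num

lemma decayProfile_balance (hH : 0 < H) (hr : 0 ≤ r) :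
    (1 - H ^ 2 * r ^ 2) / 2 * decayWeight H r
        - H ^ 2 * (r * (decayProfile H r - radialMean (decayProfile H) r))
      = -2 * H * decayProfile H r - 1 / 6 := by
  have : 0 < 1 + H * r := by positivity
  rw [mul_sub, mul_radialMean, integral_decayProfile hH hr, decayWeight, decayProfile]
  field_simp
  ring

lemma deSitter_increment_le (hH : 0 < H) (hg : ContinuousOn g (Icc 0 r₂)) (h0 : 0 ≤ r₁)
    (h12 : r₁ ≤ r₂)
    (hmax : ∀ r ∈ Icc r₁ r₂, g r - b * decayProfile H r ≤ g r₂ - b * decayProfile H r₂) :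
    (b * ((1 - H ^ 2 * r₂ ^ 2) / 2 * decayWeight H r₂) - H ^ 2 * (r₂ * (g r₂ - radialMean g r₂)))
        - (b * ((1 - H ^ 2 * r₁ ^ 2) / 2 * decayWeight H r₁)
          - H ^ 2 * (r₁ * (g r₁ - radialMean g r₁)))
      ≤ -2 * H * b * (decayProfile H r₂ - decayProfile H r₁) := by
  have hA : ContinuousOn (fun r => b * decayProfile H r) (Icc 0 r₂) :=
    ((continuousOn_decayProfile hH).mono Icc_subset_Ici_self).const_mul b
  have hk := mul_sub_radialMean_le_of_le_right (hg.fun_sub hA) h0 h12 hmax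
  rw [radialMean_sub hg hA ⟨h0, h12⟩, radialMean_sub hg hA ⟨h0.trans h12, le_rfl⟩,
    radialMean_const_mul, radialMean_const_mul] at hk
  linear_combination H ^ 2 * hk + b * decayProfile_balance hH (h0.trans h12)
    - b * decayProfile_balance hH h0

end DecayProfile

/-! ### Solutions -/

lemma deriv_mul_sub_nonpos_of_isMaxOn_uIcc {f : ℝ → ℝ} {f' x y : ℝ}
    (hf : HasDerivWithinAt f f' (uIcc x y) x) (hmax : IsMaxOn f (uIcc x y) x) :
    f' * (y - x) ≤ 0 := by
  have htangent : y - x ∈ posTangentConeAt (uIcc x y) x :=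
    sub_mem_posTangentConeAt_of_segment_subset (segment_eq_uIcc x y).subset
  simpa [mul_comm] using hmax.localize.hasFDerivWithinAt_nonpos hf.hasFDerivWithinAt htangent

namespace IsC1Solution

variable {Λ κ R c m u r : ℝ} {h : ℝ → ℝ → ℝ}

lemma hasDerivWithinAt_pdU (hsol : IsC1Solution Λ κ R h) (hu : 0 ≤ u) (hr : r ∈ Icc 0 R) :
    HasDerivWithinAt (fun v => h v r) (pdU h u r) (Ici 0) u :=
  (hsol.2.1 u hu r hr).1.hasDerivWithinAt

lemma hasDerivWithinAt_pdR (hsol : IsC1Solution Λ κ R h) (hu : 0 ≤ u) (hr : r ∈ Icc 0 R) :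
    HasDerivWithinAt (h u) (pdR R h u r) (Icc 0 R) r :=
  (hsol.2.1 u hu r hr).2.hasDerivWithinAt

lemma neg (hsol : IsC1Solution Λ κ R h) : IsC1Solution Λ κ R (-h) := by
  have hU : pdU (-h) = -pdU h := by funext u r; exact derivWithin.fun_neg
  have hR : pdR R (-h) = -pdR R h := by funext u r; exact derivWithin.fun_neg
  have havg : radAvg (-h) = -radAvg h := by
    funext u r
    by_cases hr : r = 0 <;> simp [radAvg, hr]
  have hf : metricF κ (-h) = metricF κ h := by
    funext u r
    simp only [metricF, havg, Pi.neg_apply, neg_sub_neg, sub_sq_comm]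
  have hft : metricFt Λ κ (-h) = metricFt Λ κ h := by funext u r; simp only [metricFt, hf]
  have hG : coefG Λ κ (-h) = coefG Λ κ h := by funext u r; simp only [coefG, hf, hft]
  obtain ⟨hcont, hdiff, hcontU, hcontR, heq⟩ := hsol
  refine ⟨hcont.neg, fun u hu r hr => ⟨(hdiff u hu r hr).1.neg, (hdiff u hu r hr).2.neg⟩, ?_, ?_,
    fun u hu r hr => ?_⟩
  · rw [hU]; exact hcontU.neg
  · rw [hR]; exact hcontR.neg
  · rw [hU, hR, havg, hft, hG]
    simp only [Pi.neg_apply]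
    linear_combination -heq u hu r hr

lemma pdU_eq (hsol : IsC1Solution Λ κ R h) (hR : 0 < R) (hc : DeviationBound Λ κ R c) (hu : 0 ≤ u)
    (hm : |m| ≤ 1) (hh : IncrementLE (h u) (fun r => m * r) (Icc 0 R)) (hr : r ∈ Icc 0 R) :
    pdU h u r = metricFt Λ κ h u r / 2 * pdR R h u r
      + coefG Λ κ h u r * (h u r - radAvg h u r) := by
  obtain ⟨hF, hΓ⟩ := hc h u m hm hh
  have hft : ContinuousOn (metricFt Λ κ h u) (Icc 0 R) := by
    have := (hF.continuousOn (by fun_prop)).add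
      (show ContinuousOn (fun r => 1 - Λ / 3 * r ^ 2) (Icc 0 R) by fun_prop)
    exact this.congr fun r _ => by simp [ftDev]
  have hG : ContinuousOn (coefG Λ κ h u) (Icc 0 R) := by
    have := (hΓ.continuousOn (by fun_prop)).sub
      (show ContinuousOn (fun r => Λ / 3 * r) (Icc 0 R) by fun_prop)
    exact this.congr fun r _ => by simp [gDev]
  have hslice {k : ℝ × ℝ → ℝ} (hk : ContinuousOn k (Ici 0 ×ˢ Icc 0 R)) :
      ContinuousOn (fun r => k (u, r)) (Icc 0 R) :=
    hk.comp (by fun_prop) fun r hr => ⟨hu, hr⟩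
  obtain ⟨-, -, hcontU, hcontR, heq⟩ := hsol
  have hrhs : ContinuousOn (fun r => metricFt Λ κ h u r / 2 * pdR R h u r
      + coefG Λ κ h u r * (h u r - radAvg h u r)) (Icc 0 R) :=
    ((hft.div_const 2).mul (hslice hcontR)).add
      (hG.mul ((incrementLE_sub_radAvg hh).continuousOn (by fun_prop)))
  have heqOn : EqOn (pdU h u) (fun r => metricFt Λ κ h u r / 2 * pdR R h u r
      + coefG Λ κ h u r * (h u r - radAvg h u r)) (Ioc 0 R) := fun r hr =>
    (sub_eq_iff_eq_add'.1 (heq u hu r hr))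
  exact heqOn.of_subset_closure (hslice hcontU) hrhs Ioc_subset_Icc_self
    (closure_Ioc hR.ne).ge hr

end IsC1Solution

/-! ### The equation at an extremal pair -/

section Comparison

variable {κ H R c m b δ M r₁ r₂ u : ℝ} {g Γ : ℝ → ℝ} {h : ℝ → ℝ → ℝ}

lemma abs_mul_sub_radialMean_increment_le (hΓ : IncrementLE Γ (fun r => δ * r) (Icc 0 R))
    (hΓ0 : Γ 0 = 0) (hg : ContinuousOn g (Icc 0 R)) (hδ : 0 ≤ δ) (hb : 0 ≤ b)
    (hgb : ∀ s ∈ Icc 0 R, ∀ t ∈ Icc 0 R, s ≤ t → |g t - g s| ≤ b * (t - s) + M)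
    (hr₁ : r₁ ∈ Icc 0 R) (hr₂ : r₂ ∈ Icc 0 R) (h12 : r₁ ≤ r₂) :
    |Γ r₂ * (g r₂ - radialMean g r₂) - Γ r₁ * (g r₁ - radialMean g r₁)|
      ≤ 3 * R * δ * (b * (r₂ - r₁) + M) := by
  have hM : 0 ≤ M := by simpa using hgb r₁ hr₁ r₁ hr₁ le_rfl
  have hdev : |g r₂ - radialMean g r₂| ≤ b * R + M :=
    abs_sub_radialMean_le hg hr₂ fun s hs =>
      (hgb s ⟨hs.1, hs.2.trans hr₂.2⟩ r₂ hr₂ hs.2).trans (by gcongr; linarith [hs.1, hr₂.2])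
  have hmean : |radialMean g r₂ - radialMean g r₁| ≤ b * (r₂ - r₁) + M :=
    abs_radialMean_sub_le hg hr₁ hr₂ fun x hx => by
      refine (hgb _ (mul_mem_Icc hr₁ hx) _ (mul_mem_Icc hr₂ hx)
        (mul_le_mul_of_nonneg_right h12 hx.1)).trans ?_
      rw [← sub_mul]
      gcongr
      exact mul_le_of_le_one_right (sub_nonneg.2 h12) hx.2
  have hΓ₁ : |Γ r₁| ≤ δ * R :=
    (hΓ.abs_le hΓ0 (mul_zero δ) hr₁).trans (mul_le_mul_of_nonneg_left hr₁.2 hδ)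
  calc |Γ r₂ * (g r₂ - radialMean g r₂) - Γ r₁ * (g r₁ - radialMean g r₁)|
      = |(Γ r₂ - Γ r₁) * (g r₂ - radialMean g r₂)
          + Γ r₁ * ((g r₂ - g r₁) - (radialMean g r₂ - radialMean g r₁))| := by ring_nf
    _ ≤ |Γ r₂ - Γ r₁| * |g r₂ - radialMean g r₂|
          + |Γ r₁| * (|g r₂ - g r₁| + |radialMean g r₂ - radialMean g r₁|) := by
      refine (abs_add_le _ _).trans ?_
      rw [abs_mul, abs_mul]
      gcongr
      exact abs_sub _ _
    _ ≤ (δ * r₂ - δ * r₁) * (b * R + M)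
          + δ * R * ((b * (r₂ - r₁) + M) + (b * (r₂ - r₁) + M)) := by
      have hΓ₁₂ := hΓ r₁ hr₁ r₂ hr₂ h12
      have := (abs_nonneg _).trans hΓ₁₂
      have := (abs_nonneg _).trans hΓ₁
      gcongr
      exact hgb r₁ hr₁ r₂ hr₂ h12
    _ ≤ 3 * R * δ * (b * (r₂ - r₁) + M) := by
      nlinarith [mul_nonneg (mul_nonneg hδ hM) (show 0 ≤ R - (r₂ - r₁) by linarith [hr₁.1, hr₂.2])]

lemma incrementLE_mul_decayWeight (hH : 0 < H) (hg : IncrementLE g (fun r => δ * r) (Icc 0 R))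
    (hg0 : g 0 = 0) (hδ : 0 ≤ δ) :
    IncrementLE (fun r => g r * decayWeight H r) (fun r => (1 + 4 * H * R) * δ * r)
      (Icc 0 R) := by
  have hgR : ∀ r ∈ Icc 0 R, |g r| ≤ δ * R := fun r hr =>
    (hg.abs_le hg0 (mul_zero δ) hr).trans (mul_le_mul_of_nonneg_left hr.2 hδ)
  exact fun s hs t ht hst => (hg.mul (incrementLE_decayWeight hH) hgR
    (fun r hr => abs_decayWeight_le_one hH hr.1) s hs t ht hst).trans_eq (by ring)

lemma metricFt_axis (Λ κ : ℝ) (h : ℝ → ℝ → ℝ) (u : ℝ) : metricFt Λ κ h u 0 = 1 := by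
  simp [metricFt]

lemma metricFt_outer_nonpos (hR : 0 ≤ R) (hc : DeviationBound (3 * H ^ 2) κ R c) (hm : |m| ≤ 1)
    (hmR : c * m ^ 2 * R ≤ H ^ 2 * R ^ 2 - 1)
    (hh : IncrementLE (h u) (fun r => m * r) (Icc 0 R)) : metricFt (3 * H ^ 2) κ h u R ≤ 0 := by
  have hF := (hc h u m hm hh).1.abs_le (ftDev_zero _ _ _ _) (mul_zero _) (right_mem_Icc.2 hR)
  have := (le_abs_self _).trans hF
  rw [ftDev] at this
  linarith

/-- An interior extremum is critical, so the transport term matters only for `r₁ = 0` and `r₂ = R`,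
where the sign of `F` is favourable. -/
lemma transport_increment_nonpos {F k k' : ℝ → ℝ}
    (hF0 : 0 ≤ F 0) (hFR : F R ≤ 0) (hk : ∀ r ∈ Icc 0 R, HasDerivWithinAt k (k' r) (Icc 0 R) r)
    (h0 : 0 ≤ r₁) (h12 : r₁ < r₂) (h2 : r₂ ≤ R)
    (hmax : ∀ r ∈ Icc r₁ R, k r ≤ k r₂) (hmin : ∀ r ∈ Icc 0 r₂, k r₁ ≤ k r) :
    F r₂ * k' r₂ - F r₁ * k' r₁ ≤ 0 := by
  have hr₁ : r₁ ∈ Icc 0 R := ⟨h0, h12.le.trans h2⟩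
  have hr₂ : r₂ ∈ Icc 0 R := ⟨h0.trans h12.le, h2⟩
  have slope_right {y : ℝ} (hy : y ∈ Icc r₁ R) : k' r₂ * (y - r₂) ≤ 0 :=
    have hsub : uIcc r₂ y ⊆ Icc r₁ R := uIcc_subset_Icc ⟨h12.le, h2⟩ hy
    deriv_mul_sub_nonpos_of_isMaxOn_uIcc
      ((hk r₂ hr₂).mono (hsub.trans (Icc_subset_Icc_left h0))) fun z hz => hmax z (hsub hz)
  have slope_left {y : ℝ} (hy : y ∈ Icc 0 r₂) : -k' r₁ * (y - r₁) ≤ 0 :=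
    have hsub : uIcc r₁ y ⊆ Icc 0 r₂ := uIcc_subset_Icc ⟨h0, h12.le⟩ hy
    deriv_mul_sub_nonpos_of_isMaxOn_uIcc
      ((hk r₁ hr₁).neg.mono (hsub.trans (Icc_subset_Icc_right h2)))
      fun z hz => neg_le_neg (hmin z (hsub hz))
  have hright : F r₂ * k' r₂ ≤ 0 := by
    have hpos : 0 ≤ k' r₂ := by nlinarith [slope_right (left_mem_Icc.2 hr₁.2)]
    rcases h2.eq_or_lt with rfl | h2
    · exact mul_nonpos_of_nonpos_of_nonneg hFR hpos
    · have : k' r₂ = 0 := by nlinarith [slope_right (right_mem_Icc.2 hr₁.2)]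
      simp [this]
  have hleft : 0 ≤ F r₁ * k' r₁ := by
    have hpos : 0 ≤ k' r₁ := by nlinarith [slope_left (right_mem_Icc.2 hr₂.1)]
    rcases h0.eq_or_lt with rfl | h0
    · exact mul_nonneg hF0 hpos
    · have : k' r₁ = 0 := by nlinarith [slope_left (left_mem_Icc.2 hr₂.1)]
      simp [this]
  linarith

/-- The factor with which the deviations from de Sitter enter the comparison of increments. -/
def comparisonConst (H R : ℝ) : ℝ :=
  ((1 + 4 * H * R) / 2 + 3 * R) * (1 + H * R) ^ 4 + 3 * R

lemma comparisonConst_nonneg (hH : 0 ≤ H) (hR : 0 ≤ R) : 0 ≤ comparisonConst H R := by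
  unfold comparisonConst
  positivity

/-- The pair `r₁`, `r₂` maximises the excess of the increments of `g` over those of
`b * decayProfile H`, with maximal excess `M`. -/
structure IsExtremalPair (H R : ℝ) (g : ℝ → ℝ) (b M r₁ r₂ : ℝ) : Prop where
  nonneg : 0 ≤ r₁
  lt : r₁ < r₂
  le : r₂ ≤ R
  increment_le : ∀ s ∈ Icc 0 R, ∀ t ∈ Icc 0 R, s ≤ t →
    |g t - g s| ≤ b * (decayProfile H t - decayProfile H s) + M
  increment_eq : g r₂ - g r₁ = b * (decayProfile H r₂ - decayProfile H r₁) + M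

namespace IsExtremalPair

variable {r : ℝ}

lemma left_mem (hp : IsExtremalPair H R g b M r₁ r₂) : r₁ ∈ Icc 0 R :=
  ⟨hp.nonneg, hp.lt.le.trans hp.le⟩

lemma right_mem (hp : IsExtremalPair H R g b M r₁ r₂) : r₂ ∈ Icc 0 R :=
  ⟨hp.nonneg.trans hp.lt.le, hp.le⟩

lemma le_right (hp : IsExtremalPair H R g b M r₁ r₂) (hr : r ∈ Icc r₁ R) :
    g r - b * decayProfile H r ≤ g r₂ - b * decayProfile H r₂ := by
  have := (le_abs_self _).trans
    (hp.increment_le r₁ hp.left_mem r ⟨hp.nonneg.trans hr.1, hr.2⟩ hr.1)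
  linarith [hp.increment_eq]

lemma left_le (hp : IsExtremalPair H R g b M r₁ r₂) (hr : r ∈ Icc 0 r₂) :
    g r₁ - b * decayProfile H r₁ ≤ g r - b * decayProfile H r := by
  have := (le_abs_self _).trans
    (hp.increment_le r ⟨hr.1, hr.2.trans hp.le⟩ r₂ hp.right_mem hr.2)
  linarith [hp.increment_eq]

lemma increment_le_id (hp : IsExtremalPair H R g b M r₁ r₂) (hH : 0 < H) (hb : 0 ≤ b) :
    ∀ s ∈ Icc 0 R, ∀ t ∈ Icc 0 R, s ≤ t → |g t - g s| ≤ b * (t - s) + M := fun s hs t ht hst =>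
  (hp.increment_le s hs t ht hst).trans <| by
    have := (le_abs_self _).trans (incrementLE_decayProfile hH s hs t ht hst)
    gcongr

lemma deviation_increment_le {F : ℝ → ℝ} (hp : IsExtremalPair H R g b M r₁ r₂)
    (hH : 0 < H) (hb : 0 ≤ b) (hδ : 0 ≤ δ) (hg : ContinuousOn g (Icc 0 R))
    (hF : IncrementLE F (fun r => δ * r) (Icc 0 R)) (hF0 : F 0 = 0)
    (hΓ : IncrementLE Γ (fun r => δ * r) (Icc 0 R)) (hΓ0 : Γ 0 = 0) :
    b / 2 * (F r₂ * decayWeight H r₂ - F r₁ * decayWeight H r₁)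
        + (Γ r₂ * (g r₂ - radialMean g r₂) - Γ r₁ * (g r₁ - radialMean g r₁))
      ≤ comparisonConst H R * δ * (b * (decayProfile H r₂ - decayProfile H r₁) + M) := by
  have hR : 0 ≤ R := hp.left_mem.1.trans hp.left_mem.2
  have hFw := (le_abs_self _).trans
    (incrementLE_mul_decayWeight hH hF hF0 hδ r₁ hp.left_mem r₂ hp.right_mem hp.lt.le)
  have hΓg := (le_abs_self _).trans (abs_mul_sub_radialMean_increment_le hΓ hΓ0 hg hδ hb
    (hp.increment_le_id hH hb) hp.left_mem hp.right_mem hp.lt.le)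
  have hM : 0 ≤ M := by simpa using hp.increment_le r₁ hp.left_mem r₁ hp.left_mem le_rfl
  have hid : r₂ - r₁ ≤ (1 + H * R) ^ 4 * (decayProfile H r₂ - decayProfile H r₁) := by
    rw [mul_sub]
    exact (le_abs_self _).trans
      (incrementLE_id_decayProfile hH r₁ hp.left_mem r₂ hp.right_mem hp.lt.le)
  have hA : 0 ≤ decayProfile H r₂ - decayProfile H r₁ :=
    sub_nonneg.2 (decayProfile_le_decayProfile hH hp.nonneg hp.lt.le)
  set ΔA := decayProfile H r₂ - decayProfile H r₁
  set K := (1 + 4 * H * R) / 2 + 3 * R with hK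
  have : 0 ≤ K := by positivity
  calc b / 2 * (F r₂ * decayWeight H r₂ - F r₁ * decayWeight H r₁)
        + (Γ r₂ * (g r₂ - radialMean g r₂) - Γ r₁ * (g r₁ - radialMean g r₁))
      ≤ b / 2 * ((1 + 4 * H * R) * δ * r₂ - (1 + 4 * H * R) * δ * r₁)
        + 3 * R * δ * (b * (r₂ - r₁) + M) := by gcongr
    _ = K * δ * b * (r₂ - r₁) + 3 * R * δ * M := by rw [hK]; ring
    _ ≤ K * δ * b * ((1 + H * R) ^ 4 * ΔA) + 3 * R * δ * M := by gcongr
    _ ≤ K * (1 + H * R) ^ 4 * δ * (b * ΔA) + 3 * R * δ * M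
        + (3 * R * δ * (b * ΔA) + K * (1 + H * R) ^ 4 * δ * M) := by
      refine (le_add_of_nonneg_right ?_).trans_eq' (by ring)
      positivity
    _ = comparisonConst H R * δ * (b * ΔA + M) := by rw [comparisonConst]; ring

end IsExtremalPair

lemma IsC1Solution.pdU_increment_le (hsol : IsC1Solution (3 * H ^ 2) κ R h) (hH : 0 < H)
    (hc : DeviationBound (3 * H ^ 2) κ R c) (hc0 : 0 ≤ c) (hu : 0 ≤ u) (hm : |m| ≤ 1)
    (hmR : c * m ^ 2 * R ≤ H ^ 2 * R ^ 2 - 1) (hh : IncrementLE (h u) (fun r => m * r) (Icc 0 R))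
    (hb : 0 ≤ b) (hp : IsExtremalPair H R (h u) b M r₁ r₂) :
    pdU h u r₂ - pdU h u r₁
      ≤ -2 * H * b * (decayProfile H r₂ - decayProfile H r₁) + comparisonConst H R * (c * m ^ 2)
        * (b * (decayProfile H r₂ - decayProfile H r₁) + M) := by
  have hR : 0 < R := (hp.nonneg.trans_lt hp.lt).trans_le hp.le
  have hg : ContinuousOn (h u) (Icc 0 R) := hh.continuousOn (by fun_prop)
  obtain ⟨hF, hΓ⟩ := hc h u m hm hh
  have htransport := transport_increment_nonpos (F := metricFt (3 * H ^ 2) κ h u)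
    (by rw [metricFt_axis]; exact zero_le_one) (metricFt_outer_nonpos hR.le hc hm hmR hh)
    (fun r hr => (hsol.hasDerivWithinAt_pdR hu hr).sub
      ((hasDerivAt_decayProfile hH hr.1).hasDerivWithinAt.const_mul b))
    hp.nonneg hp.lt hp.le (fun _ => hp.le_right) (fun _ => hp.left_le)
  have hdeSitter := deSitter_increment_le hH (hg.mono (Icc_subset_Icc_right hp.le)) hp.nonneg
    hp.lt.le fun r hr => hp.le_right ⟨hr.1, hr.2.trans hp.le⟩
  have hdev := hp.deviation_increment_le hH hb (by positivity) hg hF (ftDev_zero _ _ _ _)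
    hΓ (gDev_zero _ _ _ _)
  rw [hsol.pdU_eq hR hc hu hm hh hp.left_mem, hsol.pdU_eq hR hc hu hm hh hp.right_mem,
    radAvg_eq_radialMean, radAvg_eq_radialMean]
  unfold ftDev gDev at hdev
  linear_combination htransport / 2 + hdeSitter + hdev

end Comparison

/-! ### Comparison with supersolutions -/

section Supersolution

variable {κ H R c K M r₁ r₂ u T : ℝ} {b b' m : ℝ → ℝ} {h : ℝ → ℝ → ℝ}

lemma continuousOn_increment_excess {B : ℝ → ℝ}
    (hh : ContinuousOn (fun p : ℝ × ℝ => h p.1 p.2) (Ici 0 ×ˢ Icc 0 R))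
    (hb : ContinuousOn b (Ici 0)) (hB : ContinuousOn B (Icc 0 R)) :
    ContinuousOn (fun p : ℝ × ℝ × ℝ =>
      |h p.1 p.2.2 - h p.1 p.2.1| - b p.1 * (B p.2.2 - B p.2.1))
      (Ici 0 ×ˢ Icc 0 R ×ˢ Icc 0 R) := by
  have hh₁ : ContinuousOn (fun p : ℝ × ℝ × ℝ => h p.1 p.2.1) (Ici 0 ×ˢ Icc 0 R ×ˢ Icc 0 R) :=
    hh.comp (f := fun p : ℝ × ℝ × ℝ => (p.1, p.2.1)) (by fun_prop) fun _ hp => ⟨hp.1, hp.2.1⟩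
  have hh₂ : ContinuousOn (fun p : ℝ × ℝ × ℝ => h p.1 p.2.2) (Ici 0 ×ˢ Icc 0 R ×ˢ Icc 0 R) :=
    hh.comp (f := fun p : ℝ × ℝ × ℝ => (p.1, p.2.2)) (by fun_prop) fun _ hp => ⟨hp.1, hp.2.2⟩
  have hB₁ : ContinuousOn (fun p : ℝ × ℝ × ℝ => B p.2.1) (Ici 0 ×ˢ Icc 0 R ×ˢ Icc 0 R) :=
    hB.comp (by fun_prop) fun _ hp => hp.2.1
  have hB₂ : ContinuousOn (fun p : ℝ × ℝ × ℝ => B p.2.2) (Ici 0 ×ˢ Icc 0 R ×ˢ Icc 0 R) :=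
    hB.comp (by fun_prop) fun _ hp => hp.2.2
  exact (hh₂.sub hh₁).abs.sub
    ((hb.comp (by fun_prop) fun _ hp => hp.1).mul (hB₂.sub hB₁))

/-- The excess is maximised with the weight `exp (-K * v)`; the resulting factor `exp (K * (v - u))`
makes the excess grow in time at least at rate `K` at the maximum, which is the strictness that the
contradiction needs. -/
lemma exists_touching_pair (hH : 0 < H) (K : ℝ)
    (hh : ContinuousOn (fun p : ℝ × ℝ => h p.1 p.2) (Ici 0 ×ˢ Icc 0 R))
    (hb : ContinuousOn b (Ici 0)) (hT : 0 ≤ T)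
    (hfail : ¬ IncrementLE (h T) (fun r => b T * decayProfile H r) (Icc 0 R)) :
    ∃ u ∈ Icc 0 T, ∃ M > 0, ∃ s ∈ Icc 0 R, ∃ t ∈ Icc 0 R, s ≤ t ∧
      |h u t - h u s| = b u * (decayProfile H t - decayProfile H s) + M ∧
      ∀ v ∈ Icc 0 u, ∀ s ∈ Icc 0 R, ∀ t ∈ Icc 0 R, s ≤ t → |h v t - h v s|
        ≤ b v * (decayProfile H t - decayProfile H s) + exp (K * (v - u)) * M := by
  set S : Set (ℝ × ℝ × ℝ) := (Icc 0 T ×ˢ Icc 0 R ×ˢ Icc 0 R) ∩ {p | p.2.1 ≤ p.2.2}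
  set excess : ℝ × ℝ × ℝ → ℝ := fun p =>
    |h p.1 p.2.2 - h p.1 p.2.1| - b p.1 * (decayProfile H p.2.2 - decayProfile H p.2.1)
  have hS : IsCompact S :=
    (isCompact_Icc.prod (isCompact_Icc.prod isCompact_Icc)).inter_right
      (isClosed_le (by fun_prop) (by fun_prop))
  have hcont : ContinuousOn (fun p => exp (-K * p.1) * excess p) S :=
    ContinuousOn.mul (by fun_prop) <| (continuousOn_increment_excess hh hb
      ((continuousOn_decayProfile hH).mono Icc_subset_Ici_self)).mono
        fun _ hp => ⟨hp.1.1.1, hp.1.2⟩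
  simp only [IncrementLE, ← mul_sub, not_forall, not_le, exists_prop] at hfail
  obtain ⟨s₀, hs₀, t₀, ht₀, hst₀, hexcess⟩ := hfail
  have hmem : (T, s₀, t₀) ∈ S := ⟨⟨⟨hT, le_rfl⟩, hs₀, ht₀⟩, hst₀⟩
  obtain ⟨⟨u, s, t⟩, ⟨⟨hu, hs, ht⟩, hst⟩, hmax⟩ := hS.exists_isMaxOn ⟨_, hmem⟩ hcont
  have hM : 0 < excess (u, s, t) := pos_of_mul_pos_right
    ((mul_pos (exp_pos _) (sub_pos.2 hexcess)).trans_le (hmax hmem)) (exp_pos _).le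
  refine ⟨u, hu, excess (u, s, t), hM, s, hs, t, ht, hst, (add_sub_cancel _ _).symm,
    fun v hv s' hs' t' ht' hst' => sub_le_iff_le_add'.1 ?_⟩
  have hle : exp (-K * v) * excess (v, s', t') ≤ exp (-K * u) * excess (u, s, t) :=
    hmax (show (v, s', t') ∈ S from ⟨⟨⟨hv.1, hv.2.trans hu.2⟩, hs', ht'⟩, hst'⟩)
  calc excess (v, s', t') = exp (K * v) * (exp (-K * v) * excess (v, s', t')) := by
        rw [← mul_assoc, ← exp_add]; simp
    _ ≤ exp (K * v) * (exp (-K * u) * excess (u, s, t)) := by gcongr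
    _ = exp (K * (v - u)) * excess (u, s, t) := by rw [← mul_assoc, ← exp_add]; ring_nf

lemma IsC1Solution.mul_excess_le_of_touching {Λ : ℝ} (hsol : IsC1Solution Λ κ R h) (hu : 0 < u)
    (hr₁ : r₁ ∈ Icc 0 R) (hr₂ : r₂ ∈ Icc 0 R) {A : ℝ} (hb' : HasDerivAt b (b' u) u)
    (heq : h u r₂ - h u r₁ = b u * A + M)
    (hle : ∀ v ∈ Icc 0 u, h v r₂ - h v r₁ ≤ b v * A + exp (K * (v - u)) * M) :
    K * M ≤ pdU h u r₂ - pdU h u r₁ - b' u * A := by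
  have hsub : uIcc u 0 ⊆ Ici 0 := by rw [uIcc_of_ge hu.le]; exact Icc_subset_Ici_self
  have hexp : HasDerivAt (fun v => exp (K * (v - u))) K u := by
    simpa using (((hasDerivAt_id u).sub_const u).const_mul K).exp
  have hderiv := (((hsol.hasDerivWithinAt_pdU hu.le hr₂).sub
    (hsol.hasDerivWithinAt_pdU hu.le hr₁)).mono hsub).sub
    ((hb'.mul_const A).add (hexp.mul_const M)).hasDerivWithinAt
  have hnonpos := deriv_mul_sub_nonpos_of_isMaxOn_uIcc hderiv fun v hv => by
    rw [uIcc_of_ge hu.le] at hv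
    have : exp (K * (u - u)) = 1 := by simp
    simp only [mem_ofPred_eq, Pi.sub_apply, Pi.add_apply, this]
    linarith [hle v hv]
  nlinarith

/-- `m` bounds the Lipschitz constants of a solution so well that the deviations from de Sitter
allow comparison with `b`, a supersolution of the resulting differential inequality. -/
structure IsSupersolution (H R c : ℝ) (m b b' : ℝ → ℝ) : Prop where
  abs_le_one : ∀ u ≥ 0, |m u| ≤ 1
  outer_le : ∀ u ≥ 0, c * m u ^ 2 * R ≤ H ^ 2 * R ^ 2 - 1
  nonneg : ∀ u ≥ 0, 0 ≤ b u
  hasDerivAt : ∀ u, HasDerivAt b (b' u) u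
  le_deriv : ∀ u ≥ 0, (-2 * H + comparisonConst H R * (c * m u ^ 2)) * b u ≤ b' u

lemma IsSupersolution.not_touching (hb : IsSupersolution H R c m b b')
    (hsol : IsC1Solution (3 * H ^ 2) κ R h) (hH : 0 < H) (hc : DeviationBound (3 * H ^ 2) κ R c)
    (hc0 : 0 ≤ c) (hu : 0 < u) (hh : IncrementLE (h u) (fun r => m u * r) (Icc 0 R)) (hM : 0 < M)
    (hK : comparisonConst H R * c < K)
    (hr₁ : r₁ ∈ Icc 0 R) (hr₂ : r₂ ∈ Icc 0 R) (h12 : r₁ ≤ r₂)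
    (heq : h u r₂ - h u r₁ = b u * (decayProfile H r₂ - decayProfile H r₁) + M)
    (hle : ∀ v ∈ Icc 0 u, ∀ s ∈ Icc 0 R, ∀ t ∈ Icc 0 R, s ≤ t → |h v t - h v s|
      ≤ b v * (decayProfile H t - decayProfile H s) + exp (K * (v - u)) * M) : False := by
  have hlt : r₁ < r₂ := h12.lt_of_ne fun h => by
    subst h
    simp only [sub_self, mul_zero, zero_add] at heq
    exact hM.ne heq
  have hp : IsExtremalPair H R (h u) (b u) M r₁ r₂ := by
    refine ⟨hr₁.1, hlt, hr₂.2, fun s hs t ht hst => ?_, heq⟩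
    simpa using hle u (right_mem_Icc.2 hu.le) s hs t ht hst
  have hA := sub_nonneg.2 (decayProfile_le_decayProfile hH hr₁.1 h12)
  have htime := hsol.mul_excess_le_of_touching hu hr₁ hr₂ (hb.hasDerivAt u) heq
    fun v hv => (le_abs_self _).trans (hle v hv r₁ hr₁ r₂ hr₂ h12)
  have hspace := hsol.pdU_increment_le hH hc hc0 hu.le (hb.abs_le_one u hu.le)
    (hb.outer_le u hu.le) hh (hb.nonneg u hu.le) hp
  have hsuper := mul_le_mul_of_nonneg_right (hb.le_deriv u hu.le) hA
  have hKM : K * M ≤ comparisonConst H R * (c * m u ^ 2) * M := by linarith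
  have hm : comparisonConst H R * (c * m u ^ 2) ≤ comparisonConst H R * (c * 1) := by
    have := comparisonConst_nonneg hH.le (hr₁.1.trans hr₁.2)
    have := (sq_le_one_iff_abs_le_one _).2 (hb.abs_le_one u hu.le)
    gcongr
  linarith [le_of_mul_le_mul_right hKM hM]

theorem IsSupersolution.incrementLE (hb : IsSupersolution H R c m b b')
    (hsol : IsC1Solution (3 * H ^ 2) κ R h) (hH : 0 < H) (hc : DeviationBound (3 * H ^ 2) κ R c)
    (hc0 : 0 ≤ c) (hh : ∀ u ≥ 0, IncrementLE (h u) (fun r => m u * r) (Icc 0 R))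
    (h0 : IncrementLE (h 0) (fun r => b 0 * decayProfile H r) (Icc 0 R)) (hu : 0 ≤ u) :
    IncrementLE (h u) (fun r => b u * decayProfile H r) (Icc 0 R) := by
  by_contra hfail
  obtain ⟨v, hv, M, hM, s, hs, t, ht, hst, heq, hle⟩ :=
    exists_touching_pair hH (comparisonConst H R * c + 1) hsol.1
      (fun x _ => (hb.hasDerivAt x).continuousAt.continuousWithinAt) hu hfail
  have hv0 : 0 < v := hv.1.lt_of_ne fun hv0 => by
    subst hv0
    have := h0 s hs t ht hst
    linarith
  rcases abs_choice (h v t - h v s) with hpos | hneg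
  · exact hb.not_touching hsol hH hc hc0 hv0 (hh v hv.1) hM (lt_add_one _) hs ht hst
      (hpos ▸ heq) hle
  · refine hb.not_touching hsol.neg hH hc hc0 hv0 (hh v hv.1).neg hM (lt_add_one _) hs ht hst
      ?_ fun w hw x hx y hy hxy => ?_
    · simp only [Pi.neg_apply]
      linarith
    · simp only [Pi.neg_apply, neg_sub_neg, abs_sub_comm (h w x)]
      exact hle w hw x hx y hy hxy

end Supersolution

/-! ### Exponential decay -/

/-- `μ` is a bound on the Lipschitz constant of a solution below which the deviations from de Sitter
neither reverse the sign of `f̃` at the outer boundary nor use up more than half of the decay rate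
`2 H`. -/
structure IsSmallAmplitude (H R c μ : ℝ) : Prop where
  pos : 0 < μ
  le_one : μ ≤ 1
  outer_le : c * μ ^ 2 * R ≤ H ^ 2 * R ^ 2 - 1
  rate_le : comparisonConst H R * (c * μ ^ 2) ≤ H

section Decay

variable {κ H R c μ m u : ℝ} {g g' : ℝ → ℝ} {h : ℝ → ℝ → ℝ}

lemma exists_isSmallAmplitude (hH : 0 < H) (hHR : 1 < H ^ 2 * R ^ 2) (c : ℝ) :
    ∃ μ, IsSmallAmplitude H R c μ := by
  have hsmall {k : ℝ → ℝ} (hk : Continuous k) {b : ℝ} (hb : k 0 < b) :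
      ∀ᶠ μ in nhdsWithin 0 (Ioi 0), k μ ≤ b :=
    ((hk.tendsto 0).eventually_le_const hb).filter_mono nhdsWithin_le_nhds
  have hpos : ∀ᶠ μ : ℝ in nhdsWithin 0 (Ioi 0), 0 < μ := self_mem_nhdsWithin
  obtain ⟨μ, hμ, hμ1, hout, hrate⟩ := (hpos.and ((hsmall continuous_id zero_lt_one).and
    ((hsmall (k := fun μ => c * μ ^ 2 * R) (by fun_prop)
      (b := H ^ 2 * R ^ 2 - 1) (by simpa using hHR)).and
    (hsmall (k := fun μ => comparisonConst H R * (c * μ ^ 2)) (by fun_prop)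
      (by simpa using hH))))).exists
  exact ⟨μ, hμ, hμ1, hout, hrate⟩

lemma hasDerivAt_const_mul_exp (a k u : ℝ) :
    HasDerivAt (fun v => a * exp (k * v)) (a * (k * exp (k * u))) u := by
  simpa [mul_comm] using ((hasDerivAt_const_mul k).exp (x := u)).const_mul a

lemma isSupersolution_exp (hμ : IsSmallAmplitude H R c μ) :
    IsSupersolution H R c (fun _ => μ) (fun u => μ * exp (-H * u))
      (fun u => μ * (-H * exp (-H * u))) where
  abs_le_one _ _ := by rw [abs_of_pos hμ.pos]; exact hμ.le_one
  outer_le _ _ := hμ.outer_le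
  nonneg _ _ := mul_nonneg hμ.pos.le (exp_pos _).le
  hasDerivAt := hasDerivAt_const_mul_exp μ (-H)
  le_deriv u _ := by
    rw [mul_left_comm μ]
    exact mul_le_mul_of_nonneg_right (by linarith [hμ.rate_le])
      (mul_nonneg hμ.pos.le (exp_pos _).le)

lemma isSupersolution_exp_two (hμ : IsSmallAmplitude H R c μ) (hH : 0 ≤ H) (hc : 0 ≤ c)
    (hR : 0 ≤ R) :
    IsSupersolution H R c (fun u => μ * exp (-H * u))
      (fun u => 2 * μ * exp (-2 * H * u) - μ * exp (-4 * H * u))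
      (fun u => 2 * μ * (-2 * H * exp (-2 * H * u)) - μ * (-4 * H * exp (-4 * H * u))) := by
  have hdecay : ∀ u ≥ 0, exp (-H * u) ≤ 1 := fun u hu =>
    exp_le_one_iff.2 (mul_nonpos_of_nonpos_of_nonneg (neg_nonpos.2 hH) hu)
  have hm {u : ℝ} (hu : u ≥ 0) : 0 ≤ μ * exp (-H * u) ∧ μ * exp (-H * u) ≤ μ :=
    ⟨mul_nonneg hμ.pos.le (exp_pos _).le, mul_le_of_le_one_right hμ.pos.le (hdecay u hu)⟩
  have hexp2 (u : ℝ) : exp (-2 * H * u) = exp (-H * u) ^ 2 := by rw [← exp_nat_mul]; ring_nf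
  have hexp4 (u : ℝ) : exp (-4 * H * u) = exp (-H * u) ^ 4 := by rw [← exp_nat_mul]; ring_nf
  refine ⟨fun u hu => ?_, fun u hu => ?_, fun u hu => ?_,
    fun u => (hasDerivAt_const_mul_exp _ _ u).sub (hasDerivAt_const_mul_exp _ _ u),
    fun u hu => ?_⟩
  · rw [abs_of_nonneg (hm hu).1]
    exact (hm hu).2.trans hμ.le_one
  · refine le_trans ?_ hμ.outer_le
    gcongr
    exacts [(hm hu).1, (hm hu).2]
  · rw [hexp2, hexp4]
    have := pow_le_one₀ (exp_pos (-H * u)).le (hdecay u hu) (n := 2)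
    have := hμ.pos
    have := exp_pos (-H * u)
    rw [show 2 * μ * exp (-H * u) ^ 2 - μ * exp (-H * u) ^ 4
      = μ * exp (-H * u) ^ 2 * (2 - exp (-H * u) ^ 2) by ring]
    exact mul_nonneg (by positivity) (by linarith)
  · rw [hexp2, hexp4]
    set x := exp (-H * u)
    have hx : 0 < x := exp_pos _
    have := hμ.pos
    have hrate : comparisonConst H R * (c * μ ^ 2) * (μ * x ^ 4 * (2 - x ^ 2))
        ≤ H * (μ * x ^ 4 * 2) := by
      have := comparisonConst_nonneg hH hR
      have := hμ.rate_le
      have : 2 - x ^ 2 ≤ 2 := by linarith [sq_nonneg x]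
      have : 0 ≤ 2 - x ^ 2 := by linarith [pow_le_one₀ hx.le (hdecay u hu) (n := 2)]
      gcongr
    linear_combination hrate

lemma IsC1Solution.incrementLE_of_abs_pdR_le {Λ : ℝ} (hsol : IsC1Solution Λ κ R h) (hu : 0 ≤ u)
    (hm : ∀ r ∈ Icc 0 R, |pdR R h u r| ≤ m) : IncrementLE (h u) (fun r => m * r) (Icc 0 R) :=
  incrementLE_of_abs_deriv_le ordConnected_Icc (fun _ hr => hsol.hasDerivWithinAt_pdR hu hr)
    (fun _ _ => (hasDerivAt_const_mul m).hasDerivWithinAt) hm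

theorem IsC1Solution.incrementLE_exp (hsol : IsC1Solution (3 * H ^ 2) κ R h) (hH : 0 < H)
    (hR : 0 ≤ R) (hc : DeviationBound (3 * H ^ 2) κ R c) (hc0 : 0 ≤ c)
    (hμ : IsSmallAmplitude H R c μ)
    (hsmall : ∀ u ≥ 0, IncrementLE (h u) (fun r => μ / (1 + H * R) ^ 4 * r) (Icc 0 R))
    (hu : 0 ≤ u) : IncrementLE (h u) (fun r => 2 * μ * exp (-2 * H * u) * r) (Icc 0 R) := by
  have hP : 1 ≤ (1 + H * R) ^ 4 := one_le_pow₀ (by nlinarith)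
  have := one_pos.trans_le hP
  have := hμ.pos
  have hμr : ∀ u ≥ 0, IncrementLE (h u) (fun r => μ * r) (Icc 0 R) := fun u hu s hs t ht hst => by
    refine (hsmall u hu s hs t ht hst).trans ?_
    rw [← mul_sub, ← mul_sub]
    exact mul_le_mul_of_nonneg_right (div_le_self hμ.pos.le hP) (sub_nonneg.2 hst)
  have h0 : IncrementLE (h 0) (fun r => μ * decayProfile H r) (Icc 0 R) := by
    refine (hsmall 0 le_rfl).trans fun s hs t ht hst =>
      ((incrementLE_id_decayProfile hH).const_mul _ s hs t ht hst).trans_eq ?_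
    rw [abs_of_pos (by positivity)]
    field_simp
  have hprofile {a : ℝ} (ha : 0 ≤ a) :
      IncrementLE (fun r => a * decayProfile H r) (fun r => a * r) (Icc 0 R) := by
    simpa only [abs_of_nonneg ha] using (incrementLE_decayProfile hH).const_mul a
  have hrate : ∀ u ≥ 0, IncrementLE (h u) (fun r => μ * exp (-H * u) * r) (Icc 0 R) :=
    fun u hu => ((isSupersolution_exp hμ).incrementLE hsol hH hc hc0 hμr (by simpa using h0)
      hu).trans (hprofile (by positivity))
  have hsuper := isSupersolution_exp_two hμ hH.le hc0 hR
  refine (hsuper.incrementLE hsol hH hc hc0 hrate ?_ hu).trans fun s hs t ht hst => ?_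
  · simpa [two_mul] using h0
  · refine (hprofile (hsuper.nonneg u hu) s hs t ht hst).trans ?_
    rw [← mul_sub, ← mul_sub]
    have : 0 ≤ μ * exp (-4 * H * u) := by positivity
    exact mul_le_mul_of_nonneg_right (by linarith) (sub_nonneg.2 hst)

lemma IncrementLE.abs_deriv_zero_le {g₀ : ℝ} (hg : IncrementLE g (fun r => m * r) (Icc 0 R))
    (hR : 0 < R) (hderiv : HasDerivWithinAt g g₀ (Icc 0 R) 0) : |g₀| ≤ m := by
  have slope_le {k : ℝ → ℝ} {k₀ : ℝ} (hk : IncrementLE k (fun r => m * r) (Icc 0 R))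
      (hderiv : HasDerivWithinAt k k₀ (Icc 0 R) 0) : k₀ ≤ m := by
    rw [← uIcc_of_le hR.le] at hderiv
    have := deriv_mul_sub_nonpos_of_isMaxOn_uIcc
      (hderiv.sub (hasDerivAt_const_mul m).hasDerivWithinAt) fun r hr => by
        rw [uIcc_of_le hR.le] at hr
        have := (le_abs_self _).trans (hk 0 (left_mem_Icc.2 hR.le) r hr hr.1)
        simp only [mem_ofPred_eq, Pi.sub_apply]
        linarith
    nlinarith
  exact abs_le'.2 ⟨slope_le hg hderiv, slope_le hg.neg hderiv.neg⟩

lemma IsC1Solution.pdU_axis {Λ : ℝ} (hsol : IsC1Solution Λ κ R h) (hR : 0 < R)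
    (hc : DeviationBound Λ κ R c) (hu : 0 ≤ u) (hm : |m| ≤ 1)
    (hh : IncrementLE (h u) (fun r => m * r) (Icc 0 R)) : pdU h u 0 = pdR R h u 0 / 2 := by
  rw [hsol.pdU_eq hR hc hu hm hh (left_mem_Icc.2 hR.le), metricFt_axis, radAvg, if_pos rfl]
  ring

theorem exists_abs_sub_le_exp_of_abs_deriv_le {a k : ℝ} (hk : 0 < k) (ha : 0 ≤ a)
    (hg : ∀ u ≥ 0, HasDerivWithinAt g (g' u) (Ici 0) u)
    (hle : ∀ u ≥ 0, |g' u| ≤ a * exp (-k * u)) :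
    ∃ l, ∀ u ≥ 0, |g u - l| ≤ a / k * exp (-k * u) := by
  refine IncrementLE.exists_abs_sub_le (incrementLE_of_abs_deriv_le ordConnected_Ici hg
    (fun u _ => (hasDerivAt_const_mul_exp (a / k) (-k) u).neg.hasDerivWithinAt)
    fun u hu => (hle u hu).trans_eq ?_) fun u _ => by positivity
  field_simp

theorem IsC1Solution.exists_abs_radAvg_sub_le {Λ B k : ℝ} (hsol : IsC1Solution Λ κ R h)
    (hR : 0 < R) (hc : DeviationBound Λ κ R c) (hm : |m| ≤ 1)
    (hsmall : ∀ u ≥ 0, IncrementLE (h u) (fun r => m * r) (Icc 0 R)) (hk : 0 < k) (hB : 0 ≤ B)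
    (hdecay : ∀ u ≥ 0, IncrementLE (h u) (fun r => B * exp (-k * u) * r) (Icc 0 R)) :
    ∃ φbar, ∀ u ≥ 0, ∀ r ∈ Icc 0 R,
      |radAvg h u r - φbar| ≤ (B * R + B / 2 / k) * exp (-k * u) := by
  have h0 : (0 : ℝ) ∈ Icc 0 R := left_mem_Icc.2 hR.le
  have haxis : ∀ u ≥ 0, |pdU h u 0| ≤ B / 2 * exp (-k * u) := fun u hu => by
    rw [hsol.pdU_axis hR hc hu hm (hsmall u hu), abs_div, abs_two]
    linarith [(hdecay u hu).abs_deriv_zero_le hR (hsol.hasDerivWithinAt_pdR hu h0)]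
  obtain ⟨φbar, hφ⟩ := exists_abs_sub_le_exp_of_abs_deriv_le hk (by positivity)
    (fun u hu => hsol.hasDerivWithinAt_pdU hu h0) haxis
  refine ⟨φbar, fun u hu r hr => ?_⟩
  have hradial : |radialMean (h u) r - h u 0| ≤ B * exp (-k * u) * R := by
    have hmean := (hdecay u hu).radialMean_linear 0 h0 r hr hr.1
    simp only [radialMean_zero, mul_zero, sub_zero] at hmean
    exact hmean.trans (mul_le_mul_of_nonneg_left hr.2 (by positivity))
  calc |radAvg h u r - φbar| ≤ |radialMean (h u) r - h u 0| + |h u 0 - φbar| := by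
        rw [radAvg_eq_radialMean]; exact abs_sub_le _ _ _
    _ ≤ B * exp (-k * u) * R + B / 2 / k * exp (-k * u) := add_le_add hradial (hφ u hu)
    _ = (B * R + B / 2 / k) * exp (-k * u) := by ring

end Decay

theorem scalar_field_exponential_decay_general (Λ κ R : ℝ) (hΛ : 0 < Λ) (hR : √(3 / Λ) < R) :
    ∃ ε > 0, ∃ C > 0, ∀ h : ℝ → ℝ → ℝ, IsC1Solution Λ κ R h →
      (∀ u ∈ Ici (0 : ℝ), ∀ r ∈ Icc 0 R, |pdR R h u r| ≤ ε) →
      ∃ φbar : ℝ, ∀ u ∈ Ici (0 : ℝ), ∀ r ∈ Icc 0 R,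
        |radAvg h u r - φbar| ≤ C * exp (-2 * √(Λ / 3) * u) := by
  have hR0 : 0 < R := (sqrt_nonneg _).trans_lt hR
  obtain ⟨H, hH, rfl⟩ : ∃ H > 0, Λ = 3 * H ^ 2 :=
    ⟨√(Λ / 3), sqrt_pos.2 (by positivity), by rw [sq_sqrt (by positivity)]; ring⟩
  have hHR : 1 < H ^ 2 * R ^ 2 := by
    have := (sqrt_lt' hR0).1 hR
    rw [div_lt_iff₀ hΛ] at this
    linarith
  have hrate : -2 * √(3 * H ^ 2 / 3) = -(2 * H) := by
    rw [mul_div_cancel_left₀ _ three_ne_zero, sqrt_sq hH.le, neg_mul]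
  obtain ⟨c, hc0, hc⟩ := exists_deviationBound (3 * H ^ 2) κ hR0.le
  obtain ⟨μ, hμ⟩ := exists_isSmallAmplitude hH hHR c
  have := hμ.pos
  have hP : 1 ≤ (1 + H * R) ^ 4 := one_le_pow₀ (by nlinarith)
  refine ⟨μ / (1 + H * R) ^ 4, by positivity, 2 * μ * R + 2 * μ / 2 / (2 * H), by positivity,
    fun h hsol hpdR => ?_⟩
  have hsmall : ∀ u ≥ 0, IncrementLE (h u) (fun r => μ / (1 + H * R) ^ 4 * r) (Icc 0 R) :=
    fun u hu => hsol.incrementLE_of_abs_pdR_le hu (hpdR u hu)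
  have hε : |μ / (1 + H * R) ^ 4| ≤ 1 := by
    rw [abs_of_nonneg (by positivity)]
    exact (div_le_self hμ.pos.le hP).trans hμ.le_one
  have hdecay : ∀ u ≥ 0,
      IncrementLE (h u) (fun r => 2 * μ * exp (-(2 * H) * u) * r) (Icc 0 R) := fun u hu => by
    simpa only [neg_mul] using hsol.incrementLE_exp hH hR0.le hc hc0 hμ hsmall hu
  rw [hrate]
  exact hsol.exists_abs_radAvg_sub_le hR0 hc hε hsmall (by positivity) (by positivity) hdecay

/-- Exponential convergence of the scalar field `φ = h̄` to a constant
at rate `2H`, `H = √(Λ/3)`, for C¹ solutions with small `sup(|h|+|∂_r h|)`. -/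
theorem scalar_field_exponential_decay
    (Λ κ R : ℝ) (hΛ : 0 < Λ) (hκ : 0 < κ) (hR : Real.sqrt (3 / Λ) < R) :
    ∃ ε > (0:ℝ), ∀ h : ℝ → ℝ → ℝ, IsC1Solution Λ κ R h →
      (∀ u ∈ Ici (0:ℝ), ∀ r ∈ Icc (0:ℝ) R, |h u r| + |pdR R h u r| < ε) →
      ∃ φbar : ℝ, ∃ C > (0:ℝ), ∀ u ∈ Ici (0:ℝ), ∀ r ∈ Icc (0:ℝ) R,
        |radAvg h u r - φbar| ≤ C * Real.exp (-2 * Real.sqrt (Λ / 3) * u) := by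
  obtain ⟨ε, hε, C, hC, hdecay⟩ := scalar_field_exponential_decay_general Λ κ R hΛ hR
  refine ⟨ε, hε, fun h hsol hsmall => ?_⟩
  obtain ⟨φbar, hφ⟩ := hdecay h hsol fun u hu r hr =>
    (le_add_of_nonneg_left (abs_nonneg (h u r))).trans (hsmall u hu r hr).le
  exact ⟨φbar, C, hC, hφ⟩
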